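/- arXiv:2301.02473 — 2 statements merged into one kernel-verified Lean document; each statement's English description precedes it below -/
import Mathlib

section
/- Let c₁, c₂ be real constants. Suppose x, y : ℝ → ℝ are twice differentiable with x(t) > 0 for all t, and satisfy the Newtonian equations of motion for the potential V(x,y) = c₁·√x + c₂·y. Then the cubic function J(t) = c₂·x'³ + 3c₁c₂·√x·x' − (3/2)c₁²·y' is constant in t. -/
/-!
For a separable potential `U x + c * y`, differentiating `x' ^ 3 + 3 * U x * x'` along a motion
cancels the terms quadratic in the velocity and leaves `-3 * U x * deriv U x`. If `U * deriv U` is a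
constant `κ` (equivalently, `U ^ 2` is affine), this matches `3 * κ / c` times the constant
acceleration `-c` in the `y` direction, so a linear term in `y'` completes a cubic first integral.
For `U x = c₁ * √x` one has `κ = c₁ ^ 2 / 2`.
-/

section SeparablePotential

/-- The cubic function `c * (v ^ 3 + 3 * U q * v) - 3 * κ * w` attached to the potential
`U x + c * y`, at a point with first coordinate `q` and velocity `(v, w)`. It is a first integral
when `U * deriv U = κ`; it does not involve the second coordinate. -/
def cubicIntegral {𝕜 : Type*} [Ring 𝕜] (U : 𝕜 → 𝕜) (c κ q v w : 𝕜) : 𝕜 :=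
  c * (v ^ 3 + 3 * U q * v) - 3 * κ * w

theorem hasDerivAt_cubicIntegral {𝕜 : Type*} [NontriviallyNormedField 𝕜]
    {U x v w : 𝕜 → 𝕜} {c u' t : 𝕜} (κ : 𝕜) (hU : HasDerivAt U u' (x t))
    (hx : HasDerivAt x (v t) t) (hv : HasDerivAt v (-u') t) (hw : HasDerivAt w (-c) t) :
    HasDerivAt (fun s => cubicIntegral U c κ (x s) (v s) (w s))
      (3 * c * (κ - U (x t) * u')) t := by
  have hcube : HasDerivAt (fun s => v s ^ 3) (3 * v t ^ 2 * -u') t := by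
    simpa using hv.fun_pow 3
  have hmixed : HasDerivAt (fun s => 3 * U (x s) * v s)
      (3 * (u' * v t) * v t + 3 * U (x t) * -u') t :=
    ((hU.comp t hx).const_mul 3).fun_mul hv
  exact (((hcube.fun_add hmixed).const_mul c).fun_sub (hw.const_mul (3 * κ))).congr_deriv (by ring)

theorem cubicIntegral_eq_of_mul_deriv_eq {𝕜 : Type*} [RCLike 𝕜] {U x v w : 𝕜 → 𝕜} {c κ : 𝕜}
    (hU : ∀ t, DifferentiableAt 𝕜 U (x t)) (hκ : ∀ t, U (x t) * deriv U (x t) = κ)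
    (hx : ∀ t, HasDerivAt x (v t) t) (hv : ∀ t, HasDerivAt v (-deriv U (x t)) t)
    (hw : ∀ t, HasDerivAt w (-c) t) (t₁ t₂ : 𝕜) :
    cubicIntegral U c κ (x t₁) (v t₁) (w t₁) = cubicIntegral U c κ (x t₂) (v t₂) (w t₂) := by
  have hderiv (t : 𝕜) : HasDerivAt (fun s => cubicIntegral U c κ (x s) (v s) (w s)) 0 t := by
    simpa only [hκ, sub_self, mul_zero] using
      hasDerivAt_cubicIntegral κ (hU t).hasDerivAt (hx t) (hv t) (hw t)
  exact is_const_of_deriv_eq_zero (fun t => (hderiv t).differentiableAt)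
    (fun t => (hderiv t).deriv) t₁ t₂

end SeparablePotential

theorem const_mul_sqrt_mul_deriv (c : ℝ) {a : ℝ} (ha : 0 < a) :
    c * √a * deriv (fun b => c * √b) a = c ^ 2 / 2 := by
  have hsqrt : √a ≠ 0 := (Real.sqrt_pos.mpr ha).ne'
  rw [((Real.hasDerivAt_sqrt ha.ne').const_mul c).deriv]
  field_simp

theorem stmt_5 (c₁ c₂ : ℝ) (x y x' y' x'' y'' : ℝ → ℝ) (V : ℝ → ℝ → ℝ) (J : ℝ → ℝ)
    (hV : ∀ a b : ℝ, V a b = c₁ * Real.sqrt a + c₂ * b)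
    (hx : ∀ t, HasDerivAt x (x' t) t)
    (hy : ∀ t, HasDerivAt y (y' t) t)
    (hx' : ∀ t, HasDerivAt x' (x'' t) t)
    (hy' : ∀ t, HasDerivAt y' (y'' t) t)
    (hxpos : ∀ t, 0 < x t)
    (heqx : ∀ t, x'' t = - deriv (fun a => V a (y t)) (x t))
    (heqy : ∀ t, y'' t = - deriv (fun b => V (x t) b) (y t))
    (hJ : ∀ t, J t =
      c₂ * x' t ^ 3 + 3 * c₁ * c₂ * Real.sqrt (x t) * x' t - (3 / 2) * c₁ ^ 2 * y' t) :
    ∀ t₁ t₂ : ℝ, J t₁ = J t₂ := by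
  have hU (t : ℝ) : DifferentiableAt ℝ (fun a => c₁ * √a) (x t) :=
    ((Real.hasDerivAt_sqrt (hxpos t).ne').const_mul c₁).differentiableAt
  have hxacc (t : ℝ) : x'' t = -deriv (fun a => c₁ * √a) (x t) := by
    simp only [heqx, hV, deriv_add_const]
  have hyacc (t : ℝ) : y'' t = -c₂ := by
    simp only [heqy, hV, deriv_const_add, deriv_const_mul_id']
  have hJcubic (t : ℝ) :
      J t = cubicIntegral (fun a => c₁ * √a) c₂ (c₁ ^ 2 / 2) (x t) (x' t) (y' t) := by
    rw [hJ, cubicIntegral]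
    ring
  intro t₁ t₂
  rw [hJcubic, hJcubic]
  exact cubicIntegral_eq_of_mul_deriv_eq hU (fun t => const_mul_sqrt_mul_deriv c₁ (hxpos t)) hx
    (fun t => hxacc t ▸ hx' t) (fun t => hyacc t ▸ hy' t) t₁ t₂
end

section
/- Let c₂, c₃ be real constants. Suppose x, y : ℝ → ℝ are twice differentiable with x(t) ≠ 0 and y(t) ≠ 0 for all t, and satisfy the Newtonian equations of motion for the potential V(x,y) = c₂/x² + c₃/y². Then the time-dependent cubic function J(t) = t·(y·x'²·y' − x·x'·y'² − 2c₃·(x/y²)·x' + 2c₂·(y/x²)·y') − 2y²·x'² − x²·y'² + 3xy·x'·y' − 4c₂·y²/x² − 2c₃·x²/y² is constant in t. -/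
/-!
The system splits into two one-dimensional inverse-square problems. For each of them the doubled
energy `E = x'² + 2 c / x²` is conserved, and since `c / x²` is homogeneous of degree `-2`, Euler's
identity turns the virial `(x x')' = x'² + x x''` into `(x x')' = E`. Hence `u = x x'` moves
uniformly and `(x²)' = 2 u`. Let `F` and `v = y y'` denote the corresponding quantities for `y`.
Then `J = t (E v - F u) - 2 E y² - F x² + 3 u v`, whose derivative vanishes identically once
`E' = F' = 0`, `u' = E` and `v' = F`.
-/

section FirstIntegral

variable {𝕜 : Type*} [NontriviallyNormedField 𝕜]

/-- Twice the energy of a unit-mass particle with position `q` and velocity `v` on a line with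
potential `U`; doubling avoids the factor `1 / 2` throughout. -/
def doubledEnergy (U : 𝕜 → 𝕜) (q v : 𝕜) : 𝕜 := v ^ 2 + 2 * U q

variable {U W x y x' y' : 𝕜 → 𝕜} {t : 𝕜}

theorem hasDerivAt_doubledEnergy_zero (hU : DifferentiableAt 𝕜 U (x t))
    (hx : HasDerivAt x (x' t) t) (hx' : HasDerivAt x' (-deriv U (x t)) t) :
    HasDerivAt (fun s => doubledEnergy U (x s) (x' s)) 0 t := by
  have hUx : HasDerivAt (fun s => U (x s)) (deriv U (x t) * x' t) t := hU.hasDerivAt.comp t hx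
  refine ((hx'.fun_pow 2).fun_add (hUx.const_mul 2)).congr_deriv ?_
  push_cast
  ring

theorem hasDerivAt_mul_velocity_of_euler (heuler : x t * deriv U (x t) = -2 * U (x t))
    (hx : HasDerivAt x (x' t) t) (hx' : HasDerivAt x' (-deriv U (x t)) t) :
    HasDerivAt (fun s => x s * x' s) (doubledEnergy U (x t) (x' t)) t := by
  refine (hx.fun_mul hx').congr_deriv ?_
  rw [doubledEnergy]
  linear_combination -heuler

theorem hasDerivAt_fun_sq {f : 𝕜 → 𝕜} {f' : 𝕜} (hf : HasDerivAt f f' t) :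
    HasDerivAt (fun s => f s ^ 2) (2 * (f t * f')) t :=
  (hf.fun_pow 2).congr_deriv (by push_cast; ring)

/-- The time-dependent cubic first integral of the potential `U a + W b`, where `U` and `W` are
homogeneous of degree `-2`, evaluated at time `t`, position `(a, b)` and velocity `(a', b')`. The
coefficients `-2`, `-1`, `3` are the values of `α`, `β`, `γ` in
`hasDerivAt_bilinear_uniform_motions_zero`. -/
def timeCubicIntegral (U W : 𝕜 → 𝕜) (t a b a' b' : 𝕜) : 𝕜 :=
  t * (doubledEnergy U a a' * (b * b') - doubledEnergy W b b' * (a * a'))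
    + -2 * (doubledEnergy U a a' * b ^ 2) + -1 * (doubledEnergy W b b' * a ^ 2)
    + 3 * ((a * a') * (b * b'))

theorem hasDerivAt_bilinear_uniform_motions_zero {α β γ : 𝕜} {E F p q u v : 𝕜 → 𝕜}
    (hα : 2 * α + γ = -1) (hβ : 2 * β + γ = 1)
    (hE : HasDerivAt E 0 t) (hF : HasDerivAt F 0 t)
    (hp : HasDerivAt p (2 * u t) t) (hq : HasDerivAt q (2 * v t) t)
    (hu : HasDerivAt u (E t) t) (hv : HasDerivAt v (F t) t) :
    HasDerivAt (fun s => s * (E s * v s - F s * u s) + α * (E s * q s) + β * (F s * p s)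
      + γ * (u s * v s)) 0 t := by
  have hbracket : HasDerivAt (fun s => E s * v s - F s * u s) 0 t :=
    ((hE.fun_mul hv).fun_sub (hF.fun_mul hu)).congr_deriv (by ring)
  have hEq : HasDerivAt (fun s => E s * q s) (2 * E t * v t) t :=
    (hE.fun_mul hq).congr_deriv (by ring)
  have hFp : HasDerivAt (fun s => F s * p s) (2 * F t * u t) t :=
    (hF.fun_mul hp).congr_deriv (by ring)
  refine (((((hasDerivAt_id' t).fun_mul hbracket).fun_add (hEq.const_mul α)).fun_add
    (hFp.const_mul β)).fun_add ((hu.fun_mul hv).const_mul γ)).congr_deriv ?_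
  linear_combination E t * v t * hα + F t * u t * hβ

theorem hasDerivAt_timeCubicIntegral_zero
    (hU : DifferentiableAt 𝕜 U (x t)) (hW : DifferentiableAt 𝕜 W (y t))
    (hUeuler : x t * deriv U (x t) = -2 * U (x t)) (hWeuler : y t * deriv W (y t) = -2 * W (y t))
    (hx : HasDerivAt x (x' t) t) (hy : HasDerivAt y (y' t) t)
    (hx' : HasDerivAt x' (-deriv U (x t)) t) (hy' : HasDerivAt y' (-deriv W (y t)) t) :
    HasDerivAt (fun s => timeCubicIntegral U W s (x s) (y s) (x' s) (y' s)) 0 t :=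
  hasDerivAt_bilinear_uniform_motions_zero (by norm_num) (by norm_num)
    (hasDerivAt_doubledEnergy_zero hU hx hx') (hasDerivAt_doubledEnergy_zero hW hy hy')
    (hasDerivAt_fun_sq hx) (hasDerivAt_fun_sq hy)
    (hasDerivAt_mul_velocity_of_euler hUeuler hx hx')
    (hasDerivAt_mul_velocity_of_euler hWeuler hy hy')

theorem hasDerivAt_const_div_sq {a : 𝕜} (c : 𝕜) (ha : a ≠ 0) :
    HasDerivAt (fun b => c / b ^ 2) (-2 * c / a ^ 3) a := by
  refine ((hasDerivAt_const a c).fun_div (hasDerivAt_pow 2 a) (pow_ne_zero 2 ha)).congr_deriv ?_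
  field_simp
  push_cast
  ring

theorem mul_deriv_const_div_sq {a : 𝕜} (c : 𝕜) (ha : a ≠ 0) :
    a * deriv (fun b => c / b ^ 2) a = -2 * (c / a ^ 2) := by
  rw [(hasDerivAt_const_div_sq c ha).deriv]
  field_simp

end FirstIntegral

theorem stmt_18 (c₂ c₃ : ℝ) (x y x' y' x'' y'' : ℝ → ℝ) (V : ℝ → ℝ → ℝ) (J : ℝ → ℝ)
    (hV : ∀ a b : ℝ, V a b = c₂ / a ^ 2 + c₃ / b ^ 2)
    (hx : ∀ t, HasDerivAt x (x' t) t)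
    (hy : ∀ t, HasDerivAt y (y' t) t)
    (hx' : ∀ t, HasDerivAt x' (x'' t) t)
    (hy' : ∀ t, HasDerivAt y' (y'' t) t)
    (hxne : ∀ t, x t ≠ 0)
    (hyne : ∀ t, y t ≠ 0)
    (heqx : ∀ t, x'' t = - deriv (fun a => V a (y t)) (x t))
    (heqy : ∀ t, y'' t = - deriv (fun b => V (x t) b) (y t))
    (hJ : ∀ t, J t =
      t * (y t * x' t ^ 2 * y' t - x t * x' t * y' t ^ 2 -
        2 * c₃ * (x t / y t ^ 2) * x' t + 2 * c₂ * (y t / x t ^ 2) * y' t) -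
      2 * y t ^ 2 * x' t ^ 2 - x t ^ 2 * y' t ^ 2 + 3 * x t * y t * x' t * y' t -
      4 * c₂ * y t ^ 2 / x t ^ 2 - 2 * c₃ * x t ^ 2 / y t ^ 2) :
    ∀ t₁ t₂ : ℝ, J t₁ = J t₂ := by
  let U : ℝ → ℝ := fun a => c₂ / a ^ 2
  let W : ℝ → ℝ := fun b => c₃ / b ^ 2
  have hforce_x : ∀ t, x'' t = -deriv U (x t) := fun t => by
    simp only [heqx, hV, deriv_add_const, U]
  have hforce_y : ∀ t, y'' t = -deriv W (y t) := fun t => by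
    simp only [heqy, hV, deriv_const_add, W]
  have hJ_eq : J = fun t => timeCubicIntegral U W t (x t) (y t) (x' t) (y' t) := by
    funext t
    simp only [hJ, timeCubicIntegral, doubledEnergy, U, W]
    ring
  have hJ_deriv : ∀ t, HasDerivAt J 0 t := fun t => hJ_eq ▸
    hasDerivAt_timeCubicIntegral_zero
      (hasDerivAt_const_div_sq c₂ (hxne t)).differentiableAt
      (hasDerivAt_const_div_sq c₃ (hyne t)).differentiableAt
      (mul_deriv_const_div_sq c₂ (hxne t)) (mul_deriv_const_div_sq c₃ (hyne t))
      (hx t) (hy t) (hforce_x t ▸ hx' t) (hforce_y t ▸ hy' t)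
  exact is_const_of_deriv_eq_zero (fun t => (hJ_deriv t).differentiableAt)
    fun t => (hJ_deriv t).deriv
end
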